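/- arXiv:1106.1581 — 3 statements merged into one kernel-verified Lean document; each statement's English description precedes it below -/
import Mathlib

section
/- Let (Ω, μ) be a measure space with μ(Ω) < ∞, and let F₀ : ℝ → [0, +∞] be convex with F₀(1/2) < ∞ and F₀(−1/2) < ∞. Define Φ(z) := ∫_Ω F₀(z(x)) dμ(x) ∈ [0, +∞] for measurable z : Ω → ℝ. Let W be a real vector space of measurable functions Ω → ℝ, let S ⊆ W be a linear subspace whose elements are bounded functions, let v ∈ W satisfy Φ(v) < ∞, and let ξ : W → ℝ be a linear map satisfying the subgradient inequality ξ(z − v) ≤ Φ(z) − Φ(v) for every z ∈ S. Then for every z ∈ S with N := sup_{x∈Ω} |z(x)| > 0 one has ξ(z) ≤ 2N · ( |ξ(v)| + μ(Ω) · (F₀(−1/2) + F₀(1/2)) ); in particular ξ restricted to S is bounded with respect to the supremum norm. -/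
/-!
Rescale `z` to `w = z / (2N)`, so that `|w| ≤ 1/2` everywhere. A value in `[-1/2, 1/2]` is a convex
combination of the endpoints, hence `F₀ (w x) ≤ F₀ (-1/2) + F₀ (1/2)` and `Φ(w)` is at most
`μ(Ω) (F₀ (-1/2) + F₀ (1/2))`. The subgradient inequality at `w`, together with `0 ≤ Φ(v)`, bounds
`ξ w - ξ v` by this quantity, and `ξ z = 2N ξ w`.
-/


open MeasureTheory

/-- Quantitative core of the Proposition: any weak subgradient ξ of the convex
integral functional Φ(z) = ∫ F₀(z) dμ at v is bounded on sup-norm-bounded functions. -/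
theorem weak_subgradient_sup_norm_bound
    {Ω : Type*} [MeasurableSpace Ω] (μ : Measure Ω) [IsFiniteMeasure μ]
    (F₀ : ℝ → ENNReal)
    (hF₀conv : ∀ x y : ℝ, ∀ t : ℝ, 0 ≤ t → t ≤ 1 →
      F₀ (t * x + (1 - t) * y) ≤ ENNReal.ofReal t * F₀ x + ENNReal.ofReal (1 - t) * F₀ y)
    (hF₀half : F₀ (1/2) ≠ ⊤) (hF₀mhalf : F₀ (-(1/2)) ≠ ⊤)
    (W S : Submodule ℝ (Ω → ℝ))
    (hW_meas : ∀ w ∈ W, Measurable w)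
    (hSW : S ≤ W)
    (hS_bdd : ∀ z ∈ S, ∃ Cz : ℝ, ∀ x, |z x| ≤ Cz)
    (v : Ω → ℝ) (hvW : v ∈ W)
    (hΦv : (∫⁻ x, F₀ (v x) ∂μ) ≠ ⊤)
    (ξ : W →ₗ[ℝ] ℝ)
    (hsub : ∀ z (hz : z ∈ S),
      ENNReal.ofReal (ξ (⟨z, hSW hz⟩ - ⟨v, hvW⟩) + (∫⁻ x, F₀ (v x) ∂μ).toReal)
        ≤ ∫⁻ x, F₀ (z x) ∂μ) :
    ∀ z (hz : z ∈ S) (N : ℝ), N = ⨆ x, |z x| → 0 < N →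
      ξ ⟨z, hSW hz⟩ ≤ 2 * N * (|ξ ⟨v, hvW⟩|
        + (μ Set.univ).toReal * ((F₀ (-(1/2))).toReal + (F₀ (1/2)).toReal)) := by
  intro z hz N hN hNpos
  obtain ⟨Cz, hCz⟩ := hS_bdd z hz
  -- Boundedness of `z` makes the real-valued `⨆` a genuine supremum.
  have hbd : BddAbove (Set.range fun x => |z x|) := ⟨Cz, by rintro _ ⟨x, rfl⟩; exact hCz x⟩
  have hzN : ∀ x, |z x| ≤ N := fun x => hN ▸ le_ciSup hbd x
  have hw : (2 * N)⁻¹ • z ∈ S := S.smul_mem _ hz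
  have hpt : ∀ x, F₀ (((2 * N)⁻¹ • z) x) ≤ F₀ (-(1/2)) + F₀ (1/2) := by
    intro x
    have hx := abs_le.mp (hzN x)
    set a : ℝ := ((2 * N)⁻¹ • z) x with ha
    have hza : z x = 2 * N * a := by
      rw [ha, Pi.smul_apply, smul_eq_mul]
      field_simp
    have h1 : -(1/2) ≤ a := by
      by_contra! h
      nlinarith [hx.1]
    have h2 : a ≤ 1/2 := by
      by_contra! h
      nlinarith [hx.2]
    have h := hF₀conv (1/2) (-(1/2)) (a + 1/2) (by linarith) (by linarith)
    rw [show (a + 1/2) * (1/2) + (1 - (a + 1/2)) * (-(1/2)) = a by ring] at h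
    refine h.trans ?_
    rw [add_comm]
    exact add_le_add
      (mul_le_of_le_one_left' (ENNReal.ofReal_le_one.2 (by linarith)))
      (mul_le_of_le_one_left' (ENNReal.ofReal_le_one.2 (by linarith)))
  have hint : ∫⁻ x, F₀ (((2 * N)⁻¹ • z) x) ∂μ ≤ (F₀ (-(1/2)) + F₀ (1/2)) * μ Set.univ :=
    (lintegral_mono hpt).trans_eq (lintegral_const _)
  have htop : (F₀ (-(1/2)) + F₀ (1/2)) * μ Set.univ ≠ ⊤ :=
    ENNReal.mul_ne_top (ENNReal.add_ne_top.2 ⟨hF₀mhalf, hF₀half⟩) (measure_ne_top μ _)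
  have hle := (ENNReal.ofReal_le_iff_le_toReal htop).1 ((hsub _ hw).trans hint)
  rw [ENNReal.toReal_mul, ENNReal.toReal_add hF₀mhalf hF₀half, map_sub] at hle
  have hξ : ξ ⟨(2 * N)⁻¹ • z, hSW hw⟩ = (2 * N)⁻¹ * ξ ⟨z, hSW hz⟩ :=
    ξ.map_smul (2 * N)⁻¹ ⟨z, hSW hz⟩
  rw [hξ] at hle
  have hΦ : 0 ≤ (∫⁻ x, F₀ (v x) ∂μ).toReal := ENNReal.toReal_nonneg
  have habs := le_abs_self (ξ ⟨v, hvW⟩)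
  rw [← inv_mul_le_iff₀ (by positivity)]
  linarith
end

section
/- Let f : ℝ → ℝ be nondecreasing with f(0) = 0. Let μ₀ ∈ (0,1) and m ∈ ℝ with |m| ≤ 1 − μ₀, and set M := max( |f(1 − μ₀/2)|, |f(−1 + μ₀/2)| ). Then for every r ∈ ℝ one has f(r)(r − m) ≥ (μ₀/2)|f(r)| − 3M. Consequently, if (Ω, μ) is a measure space with μ(Ω) < ∞ and u : Ω → ℝ is measurable with f∘u and (f∘u)·(u − m) μ-integrable, then ∫_Ω f(u(x))(u(x) − m) dμ(x) ≥ (μ₀/2) ∫_Ω |f(u(x))| dμ(x) − 3M·μ(Ω). -/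
/-!
The integral bound is the pointwise bound integrated over a finite measure space.
For the pointwise bound, monotonicity and `f 0 = 0` make `f r` and `r` have the same sign.
If `r ≥ 1 - μ₀/2`, then `r - m ≥ μ₀/2` and the inequality holds without the error term. If
`0 ≤ r ≤ 1 - μ₀/2`, then `0 ≤ f r ≤ M` while `r - m - μ₀/2 ≥ -1`, so the loss is at most `M`.
The case `r ≤ 0` is symmetric.
-/

open MeasureTheory

/-- Coercivity estimate (conto52): testing by u − m with the mean m separated
from ±1 yields an L¹ bound on the monotone nonlinearity f. -/
theorem monotone_nonlinearity_coercivity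
    (f : ℝ → ℝ) (hf : Monotone f) (hf0 : f 0 = 0)
    (μ₀ m M : ℝ) (hμ₀ : μ₀ ∈ Set.Ioo (0:ℝ) 1) (hm : |m| ≤ 1 - μ₀)
    (hM : M = max |f (1 - μ₀/2)| |f (-1 + μ₀/2)|)
    {Ω : Type*} [MeasurableSpace Ω] (μ : Measure Ω) [IsFiniteMeasure μ]
    (u : Ω → ℝ) (hum : Measurable u)
    (hint1 : Integrable (fun x => f (u x)) μ)
    (hint2 : Integrable (fun x => f (u x) * (u x - m)) μ) :
    (∀ r : ℝ, f r * (r - m) ≥ μ₀/2 * |f r| - 3 * M) ∧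
    ∫ x, f (u x) * (u x - m) ∂μ ≥
      μ₀/2 * (∫ x, |f (u x)| ∂μ) - 3 * M * (μ Set.univ).toReal := by
  obtain ⟨h0, h1⟩ := hμ₀
  obtain ⟨hm1, hm2⟩ := abs_le.mp hm
  have hMp : f (1 - μ₀/2) ≤ M := hM ▸ (le_abs_self _).trans (le_max_left _ _)
  have hMn : -f (-1 + μ₀/2) ≤ M := hM ▸ (neg_le_abs _).trans (le_max_right _ _)
  have hM0 : 0 ≤ M := hM ▸ (abs_nonneg _).trans (le_max_left _ _)
  have key : ∀ r : ℝ, f r * (r - m) ≥ μ₀/2 * |f r| - 3 * M := by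
    intro r
    rcases le_total 0 r with hr | hr
    · have hfr : 0 ≤ f r := hf0 ▸ hf hr
      rw [abs_of_nonneg hfr]
      rcases le_total (1 - μ₀/2) r with h | h
      · nlinarith [mul_nonneg hfr (show 0 ≤ r - m - μ₀/2 by linarith)]
      · have hfM : f r ≤ M := (hf h).trans hMp
        nlinarith [mul_nonneg hfr (show 0 ≤ r - m - μ₀/2 + 1 by linarith)]
    · have hfr : f r ≤ 0 := hf0 ▸ hf hr
      rw [abs_of_nonpos hfr]
      rcases le_total r (-1 + μ₀/2) with h | h
      · nlinarith [mul_nonneg (neg_nonneg.mpr hfr) (show 0 ≤ m - r - μ₀/2 by linarith)]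
      · have hfM : -f r ≤ M := (neg_le_neg (hf h)).trans hMn
        nlinarith [mul_nonneg (neg_nonneg.mpr hfr) (show 0 ≤ m - r - μ₀/2 + 1 by linarith)]
  refine ⟨key, ?_⟩
  have hi : Integrable (fun x => μ₀/2 * |f (u x)|) μ := hint1.abs.const_mul _
  have hle := integral_mono (hi.sub (integrable_const (3 * M))) hint2 fun x => key (u x)
  have heq : ∫ x, (μ₀/2 * |f (u x)| - 3 * M) ∂μ
      = μ₀/2 * (∫ x, |f (u x)| ∂μ) - 3 * M * (μ Set.univ).toReal := by
    rw [integral_sub hi (integrable_const _), integral_const_mul, integral_const, smul_eq_mul,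
      Measure.real, mul_comm (μ Set.univ).toReal]
  exact heq.symm.trans_le hle
end

section
/- Let E be a real inner product space, let I ⊆ ℝ be a convex set, and let a : ℝ → ℝ satisfy a(r) > 0 for every r ∈ I and be such that r ↦ 1/a(r) is concave on I. Then the function G : I × E → ℝ defined by G(r, g) := (a(r)/2) ‖g‖² is convex on I × E, i.e., for all (r₁, g₁), (r₂, g₂) ∈ I × E and t ∈ [0,1]: G(t r₁ + (1−t) r₂, t g₁ + (1−t) g₂) ≤ t G(r₁, g₁) + (1−t) G(r₂, g₂). -/
/-!
With `s = 1 - t`, `x = ‖g₁‖`, `y = ‖g₂‖` and `m = t / a r₁ + s / a r₂`, the triangle inequality and a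
weighted Cauchy–Schwarz inequality (joint convexity of `(x, p) ↦ x² / p`, `p > 0`) give
`‖t g₁ + s g₂‖² ≤ (t x + s y)² ≤ m (t a(r₁) x² + s a(r₂) y²)`, while concavity of `1 / a` says
exactly that `a (t r₁ + s r₂) * m ≤ 1`. Multiplying the two yields the claim.
-/

/-- Weighted Cauchy–Schwarz: the two sides differ by `t * s * (p * x - q * y) ^ 2 / (p * q)`. -/
lemma sq_add_le_weighted (t s p q x y : ℝ) (ht : 0 ≤ t) (hs : 0 ≤ s)
    (hp : 0 < p) (hq : 0 < q) :
    (t * x + s * y) ^ 2 ≤ (t * p⁻¹ + s * q⁻¹) * (t * (p * x ^ 2) + s * (q * y ^ 2)) := by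
  have key : (t * p⁻¹ + s * q⁻¹) * (t * (p * x ^ 2) + s * (q * y ^ 2)) - (t * x + s * y) ^ 2
      = t * s * (p * x - q * y) ^ 2 / (p * q) := by
    field_simp
    ring
  have : 0 ≤ t * s * (p * x - q * y) ^ 2 / (p * q) := by positivity
  linarith

/-- Convexity of the gradient energy density G(r,g) = (a(r)/2)‖g‖² on I × E
when a > 0 on I and 1/a is concave on I. -/
theorem gradient_energy_density_convex
    {E : Type*} [NormedAddCommGroup E] [InnerProductSpace ℝ E]
    (I : Set ℝ) (hI : Convex ℝ I) (a : ℝ → ℝ)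
    (ha_pos : ∀ r ∈ I, 0 < a r)
    (ha_conc : ConcaveOn ℝ I (fun r => (a r)⁻¹)) :
    ∀ r₁ ∈ I, ∀ r₂ ∈ I, ∀ (g₁ g₂ : E), ∀ t : ℝ, 0 ≤ t → t ≤ 1 →
      a (t * r₁ + (1 - t) * r₂) / 2 * ‖t • g₁ + (1 - t) • g₂‖^2 ≤
        t * (a r₁ / 2 * ‖g₁‖^2) + (1 - t) * (a r₂ / 2 * ‖g₂‖^2) := by
  intro r₁ h₁ r₂ h₂ g₁ g₂ t ht ht1
  have hs : 0 ≤ 1 - t := sub_nonneg.2 ht1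
  have hts : t + (1 - t) = 1 := by ring
  have hp := ha_pos r₁ h₁
  have hq := ha_pos r₂ h₂
  have hA : 0 < a (t * r₁ + (1 - t) * r₂) := ha_pos _ (hI h₁ h₂ ht hs hts)
  have hc : t * (a r₁)⁻¹ + (1 - t) * (a r₂)⁻¹ ≤ (a (t * r₁ + (1 - t) * r₂))⁻¹ :=
    ha_conc.2 h₁ h₂ ht hs hts
  have hN : ‖t • g₁ + (1 - t) • g₂‖ ≤ t * ‖g₁‖ + (1 - t) * ‖g₂‖ := by
    refine (norm_add_le _ _).trans_eq ?_
    rw [norm_smul_of_nonneg ht, norm_smul_of_nonneg hs]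
  generalize a (t * r₁ + (1 - t) * r₂) = A at hA hc ⊢
  have hS : 0 ≤ t * (a r₁ * ‖g₁‖ ^ 2) + (1 - t) * (a r₂ * ‖g₂‖ ^ 2) := by positivity
  have hmain : A * ‖t • g₁ + (1 - t) • g₂‖ ^ 2
      ≤ t * (a r₁ * ‖g₁‖ ^ 2) + (1 - t) * (a r₂ * ‖g₂‖ ^ 2) := by
    calc A * ‖t • g₁ + (1 - t) • g₂‖ ^ 2
        ≤ A * (t * ‖g₁‖ + (1 - t) * ‖g₂‖) ^ 2 := by gcongr
      _ ≤ A * ((t * (a r₁)⁻¹ + (1 - t) * (a r₂)⁻¹) *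
            (t * (a r₁ * ‖g₁‖ ^ 2) + (1 - t) * (a r₂ * ‖g₂‖ ^ 2))) := by
          gcongr
          exact sq_add_le_weighted _ _ _ _ _ _ ht hs hp hq
      _ ≤ A * (A⁻¹ * (t * (a r₁ * ‖g₁‖ ^ 2) + (1 - t) * (a r₂ * ‖g₂‖ ^ 2))) := by gcongr
      _ = _ := mul_inv_cancel_left₀ hA.ne' _
  linarith
end
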